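/- Consider the instance with k ≥ 4 agents relevant and goods: k−1 'large' goods each valued 3k−7 by agent 1, k−2 'medium' goods valued 3, and k−1 'small' goods valued 1 (additive valuation). Then the k-maximin share of agent 1 over all 3k−4 goods equals 3k−6. -/

import Mathlib

open Finset

/-- `k`-maximin share of additive valuation `v` restricted to `S`. -/
noncomputable def mu {α : Type*} [Fintype α] [DecidableEq α]
    (v : α → ℝ) (k : ℕ) (S : Finset α) : ℝ :=
  ⨆ P : α → Fin k, ⨅ j : Fin k, ∑ g ∈ S.filter (fun g => P g = j), v g

/-!
Some bundle of any partition is worth at most the average bundle, so a partition into bundles of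
equal value is optimal. Pairing each large good with a small one and collecting all medium goods in
the remaining bundle is such a partition.
-/

section MaximinShare

variable {α : Type*} {v : α → ℝ} {S : Finset α}

theorem card_mul_iInf_sum_le_sum {ι : Type*} [Fintype ι] [DecidableEq ι] (P : α → ι) :
    Fintype.card ι * ⨅ j, ∑ g ∈ S with P g = j, v g ≤ ∑ g ∈ S, v g :=
  calc
    _ = ∑ _i : ι, ⨅ j, ∑ g ∈ S with P g = j, v g := by simp
    _ ≤ ∑ i : ι, ∑ g ∈ S with P g = i, v g :=
      sum_le_sum fun i _ => ciInf_le (Set.finite_range _).bddBelow i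
    _ = ∑ g ∈ S, v g := sum_fiberwise S P v

variable [Fintype α] [DecidableEq α] {k : ℕ}

theorem iInf_sum_le_mu (P : α → Fin k) :
    ⨅ j : Fin k, ∑ g ∈ S with P g = j, v g ≤ mu v k S :=
  le_ciSup (f := fun P : α → Fin k => ⨅ j, ∑ g ∈ S with P g = j, v g)
    (Set.finite_range _).bddAbove P

theorem mu_le_sum_div [NeZero k] : mu v k S ≤ (∑ g ∈ S, v g) / k := by
  refine ciSup_le fun P => (le_div_iff₀' (Nat.cast_pos.2 (NeZero.pos k))).2 ?_
  simpa using card_mul_iInf_sum_le_sum (v := v) (S := S) P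

theorem mu_eq_of_forall_sum_eq [NeZero k] {c : ℝ} (P : α → Fin k)
    (hP : ∀ j, ∑ g ∈ S with P g = j, v g = c) : mu v k S = c := by
  have total : ∑ g ∈ S, v g = k * c := by
    rw [← sum_fiberwise S P v]
    simp [hP]
  apply le_antisymm
  · calc
      mu v k S ≤ k * c / k := total ▸ mu_le_sum_div
      _ = c := mul_div_cancel_left₀ c (NeZero.ne _)
  · simpa [hP] using iInf_sum_le_mu (v := v) (S := S) P

end MaximinShare

section PairingPartition

variable {κ : Type*} {n : ℕ}

/-- The optimal partition into `n + 1` bundles: bundle `i < n` consists of the `i`-th large and the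
`i`-th small good, and the last bundle of all medium goods, which may be indexed by any type. -/
def pairingPartition : Fin n ⊕ (κ ⊕ Fin n) → Fin (n + 1) :=
  Sum.elim Fin.castSucc (Sum.elim (fun _ => Fin.last n) Fin.castSucc)

variable [Fintype κ] (v : Fin n ⊕ (κ ⊕ Fin n) → ℝ)

theorem sum_pairingPartition_castSucc (i : Fin n) :
    ∑ g with pairingPartition g = i.castSucc, v g = v (.inl i) + v (.inr (.inr i)) := by
  rw [sum_filter]
  simp [pairingPartition, (Fin.castSucc_ne_last i).symm]

theorem sum_pairingPartition_last :
    ∑ g with pairingPartition g = Fin.last n, v g = ∑ x, v (.inr (.inl x)) := by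
  rw [sum_filter]
  simp [pairingPartition]

theorem mu_of_large_medium_small_general [DecidableEq κ] {c : ℝ}
    (hLS : ∀ i, v (.inl i) + v (.inr (.inr i)) = c) (hM : ∑ x, v (.inr (.inl x)) = c) :
    mu v (n + 1) univ = c := by
  refine mu_eq_of_forall_sum_eq pairingPartition fun j => ?_
  cases j using Fin.lastCases with
  | last => rw [sum_pairingPartition_last, hM]
  | cast i => rw [sum_pairingPartition_castSucc, hLS]

end PairingPartition

/-- In the instance with `k−1` large goods of value `3k−7`, `k−2` medium
goods of value `3`, and `k−1` small goods of value `1` (for agent 1), the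
`k`-maximin share of agent 1 over all `3k−4` goods equals `3k−6`. -/
theorem mu_of_large_medium_small (k : ℕ) (hk : 4 ≤ k)
    (v : Fin (k - 1) ⊕ (Fin (k - 2) ⊕ Fin (k - 1)) → ℝ)
    (hvL : ∀ x : Fin (k - 1), v (Sum.inl x) = 3 * (k : ℝ) - 7)
    (hvM : ∀ x : Fin (k - 2), v (Sum.inr (Sum.inl x)) = 3)
    (hvS : ∀ x : Fin (k - 1), v (Sum.inr (Sum.inr x)) = 1) :
    mu v k Finset.univ = 3 * (k : ℝ) - 6 := by
  obtain ⟨n, rfl⟩ := Nat.exists_eq_add_of_le' (show 2 ≤ k by omega)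
  exact mu_of_large_medium_small_general (n := n + 1) v
    (fun i => by rw [hvL i, hvS i]; ring) (by simp [hvM]; ring)
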